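/- Let n ≥ 2 and 2 ≤ m ≤ n. The minimal length of a word w over {a, b} for which there exists a state q ∈ Z_n with |δ_w⁻¹({q})| ≥ m in the Černý automaton C_n is exactly (m−2)·n + 1. That is: there is a word of length (m−2)n + 1 and a state whose preimage under that word has at least m elements, and no word of length strictly less than (m−2)n + 1 has a singleton preimage of cardinality m or more. -/

import Mathlib

/-- The two-letter alphabet of the Černý automaton. -/
inductive Letter
  | a
  | b
deriving DecidableEq

/-- The action of a letter of the Černý automaton `C_n` on the state set `ZMod n`:
`a` sends `i` to `i + 1 (mod n)`, and `b` sends `n - 1` to `0` and fixes every other state. -/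
def step (n : ℕ) : Letter → ZMod n → ZMod n
  | Letter.a, p => p + 1
  | Letter.b, p => if p = -1 then 0 else p

/-- The map `δ_w` induced by a word `w`, applying letters left to right. -/
def run (n : ℕ) : List Letter → ZMod n → ZMod n
  | [], p => p
  | x :: w, p => run n w (step n x p)

/-!
Pull preimages back one letter at a time. Under `a` a cyclic interval of states is only rotated back
by one, and under `b` its preimage is contained in the interval itself unless the interval starts at
`0`, in which case the preimage gains the state `-1` in front. After such a growth the interval
starts at `-1`, and `n - 1` rotations must pass before it starts at `0` again. Hence
`length * n - start` increases by at most one per letter. Growing at every opportunity attains this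
bound.
-/

/-- The cyclic interval `{s, s + 1, …, s + (k - 1)}` of states. For `k > n` it wraps around, so that
`k` is the number of listed elements and not the cardinality. -/
def arc {n : ℕ} (s : ZMod n) (k : ℕ) : Set (ZMod n) :=
  (fun i : ℕ => s + i) '' Set.Iio k

/-- The word `b (a ^ (n - 1) b) ^ k`, an initial segment of Černý's reset word
`b (a ^ (n - 1) b) ^ (n - 2)` when `k ≤ n - 2`. -/
def cernyWord (n : ℕ) : ℕ → List Letter
  | 0 => [Letter.b]
  | k + 1 => Letter.b :: (List.replicate (n - 1) Letter.a ++ cernyWord n k)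

section

variable {n : ℕ}

theorem arc_one (s : ZMod n) : arc s 1 = {s} := by
  simp [arc]

theorem left_mem_arc_succ (s : ZMod n) (k : ℕ) : s ∈ arc s (k + 1) :=
  ⟨0, k.succ_pos, by simp⟩

theorem arc_succ (s : ZMod n) (k : ℕ) : arc s (k + 1) = insert s (arc (s + 1) k) := by
  have hIio : Set.Iio (k + 1) = insert 0 (Nat.succ '' Set.Iio k) := by
    ext i
    cases i <;> simp
  rw [arc, hIio, Set.image_insert_eq, Set.image_image]
  simp [arc, add_assoc, add_comm (1 : ZMod n)]

theorem sub_one_mem_arc {p s : ZMod n} {k : ℕ} (hp : p ∈ arc s k) (hps : p ≠ s) :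
    p - 1 ∈ arc s k := by
  obtain ⟨_ | i, hi, rfl⟩ := hp
  · simp at hps
  · exact ⟨i, (Nat.lt_succ_self i).trans hi, by push_cast; ring⟩

theorem preimage_add_right_arc (c s : ZMod n) (k : ℕ) : (· + c) ⁻¹' arc s k = arc (s - c) k := by
  simp only [← Set.image_add_right', arc, Set.image_image, sub_eq_add_neg, add_right_comm]

theorem ncard_arc_le (s : ZMod n) (k : ℕ) : (arc s k).ncard ≤ k := by
  simpa [arc] using Set.ncard_image_le (f := fun i : ℕ => s + i) (Set.finite_Iio k)

theorem ncard_arc (s : ZMod n) {k : ℕ} (hk : k ≤ n) : (arc s k).ncard = k := by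
  have hinj : Set.InjOn (fun i : ℕ => s + i) (Set.Iio k) := fun i hi j hj hij =>
    ((ZMod.natCast_eq_natCast_iff i j n).1 (add_left_cancel hij)).eq_of_lt_of_lt
      (hi.trans_le hk) (hj.trans_le hk)
  simpa [arc] using hinj.ncard_image

theorem run_append (u v : List Letter) (p : ZMod n) : run n (u ++ v) p = run n v (run n u p) := by
  induction u generalizing p with
  | nil => rfl
  | cons x _ ih => exact ih (step n x p)

theorem run_replicate_a (k : ℕ) (p : ZMod n) : run n (List.replicate k Letter.a) p = p + k := by
  induction k generalizing p with
  | zero => simp [run]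
  | succ k ih => rw [List.replicate_succ, run, ih, step, Nat.cast_succ]; ring

theorem preimage_step_a_arc (s : ZMod n) (k : ℕ) : step n Letter.a ⁻¹' arc s k = arc (s - 1) k :=
  preimage_add_right_arc 1 s k

theorem preimage_step_b_subset (A : Set (ZMod n)) : step n Letter.b ⁻¹' A ⊆ insert (-1) A := by
  intro p hp
  by_cases h : p = -1 <;> simp_all [step]

theorem preimage_step_b_of_zero_mem {A : Set (ZMod n)} (hA : 0 ∈ A) :
    step n Letter.b ⁻¹' A = insert (-1) A := by
  ext p
  by_cases h : p = -1 <;> simp [step, h, hA]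

theorem preimage_step_b_arc_subset_of_ne_zero {s : ZMod n} (hs : s ≠ 0) (k : ℕ) :
    step n Letter.b ⁻¹' arc s k ⊆ arc s k := by
  intro p hp
  by_cases h : p = -1
  · have hzero : 0 ∈ arc s k := by simpa [step, h] using hp
    simpa [h] using sub_one_mem_arc hzero hs.symm
  · simpa [step, h] using hp

theorem arc_neg_one_succ (k : ℕ) : arc (-1 : ZMod n) (k + 1) = insert (-1) (arc 0 k) := by
  rw [arc_succ, neg_add_cancel]

theorem length_cernyWord [NeZero n] (k : ℕ) : (cernyWord n k).length = k * n + 1 := by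
  have hn := NeZero.pos n
  induction k with
  | zero => simp [cernyWord]
  | succ k ih =>
    simp only [cernyWord, List.length_cons, List.length_append, List.length_replicate, ih,
      Nat.succ_mul]
    omega

theorem preimage_run_cernyWord_zero [NeZero n] (k : ℕ) :
    run n (cernyWord n k) ⁻¹' {0} = arc (-1) (k + 2) := by
  induction k with
  | zero =>
    rw [arc_neg_one_succ, arc_one]
    exact preimage_step_b_of_zero_mem rfl
  | succ k ih =>
    have hrotate : -1 - ((n - 1 : ℕ) : ZMod n) = 0 := by
      simp [Nat.cast_sub NeZero.one_le]
    calc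
      run n (cernyWord n (k + 1)) ⁻¹' {0}
        = step n Letter.b ⁻¹'
            ((· + ((n - 1 : ℕ) : ZMod n)) ⁻¹' (run n (cernyWord n k) ⁻¹' {0})) := by
          ext p
          simp [cernyWord, run, run_append, run_replicate_a]
      _ = step n Letter.b ⁻¹' arc 0 (k + 2) := by rw [ih, preimage_add_right_arc, hrotate]
      _ = arc (-1) (k + 3) := by
          rw [preimage_step_b_of_zero_mem (left_mem_arc_succ 0 _), arc_neg_one_succ]

theorem val_le_val_sub_one_add_one (s : ZMod n) : s.val ≤ (s - 1).val + 1 := by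
  calc s.val = (s - 1 + 1).val := by rw [sub_add_cancel]
    _ ≤ (s - 1).val + (1 : ZMod n).val := ZMod.val_add_le _ _
    _ ≤ (s - 1).val + 1 := by
        gcongr
        exact ZMod.val_one_eq_one_mod n ▸ Nat.mod_le 1 n

theorem val_neg_one_add_one [NeZero n] : (-1 : ZMod n).val + 1 = n := by
  obtain ⟨k, rfl⟩ := Nat.exists_eq_succ_of_ne_zero (NeZero.ne n)
  rw [ZMod.val_neg_one]

theorem exists_preimage_step_subset_arc [NeZero n] (x : Letter) (s : ZMod n) (k : ℕ) :
    ∃ (t : ZMod n) (l : ℕ), step n x ⁻¹' arc s k ⊆ arc t l ∧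
      l * n + s.val ≤ k * n + t.val + 1 := by
  cases x with
  | a =>
    refine ⟨s - 1, k, (preimage_step_a_arc s k).subset, ?_⟩
    have := val_le_val_sub_one_add_one s
    omega
  | b =>
    by_cases hs : s = 0
    · subst hs
      refine ⟨-1, k + 1, (preimage_step_b_subset _).trans (arc_neg_one_succ k).superset, ?_⟩
      rw [add_assoc, val_neg_one_add_one, ZMod.val_zero, Nat.succ_mul, add_zero]
    · exact ⟨s, k, preimage_step_b_arc_subset_of_ne_zero hs k, Nat.le_succ _⟩

theorem exists_preimage_run_subset_arc [NeZero n] (w : List Letter) (s : ZMod n) (k : ℕ) :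
    ∃ (t : ZMod n) (l : ℕ), run n w ⁻¹' arc s k ⊆ arc t l ∧
      l * n + s.val ≤ k * n + t.val + w.length := by
  induction w with
  | nil => exact ⟨s, k, subset_rfl, le_rfl⟩
  | cons x w ih =>
    obtain ⟨t, l, hw, hl⟩ := ih
    obtain ⟨t', l', hx, hl'⟩ := exists_preimage_step_subset_arc x t l
    refine ⟨t', l', (Set.preimage_mono hw).trans hx, ?_⟩
    rw [List.length_cons]
    omega

theorem ncard_preimage_run_mul_lt [NeZero n] (w : List Letter) (q : ZMod n) :
    (run n w ⁻¹' {q}).ncard * n < w.length + 2 * n := by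
  obtain ⟨t, l, hsub, hl⟩ := exists_preimage_run_subset_arc w q 1
  rw [arc_one] at hsub
  have hcard : (run n w ⁻¹' {q}).ncard ≤ l :=
    (Set.ncard_le_ncard hsub).trans (ncard_arc_le t l)
  calc (run n w ⁻¹' {q}).ncard * n ≤ l * n := Nat.mul_le_mul_right n hcard
    _ < w.length + 2 * n := by have := t.val_lt; omega

end

/-- For `n ≥ 2` and `2 ≤ m ≤ n`, the minimal length of a word `w` over `{a, b}` for which
some state `q` of the Černý automaton `C_n` has `|δ_w⁻¹({q})| ≥ m` is exactly
`(m - 2) · n + 1`: such a word of length `(m - 2) · n + 1` exists, and no strictly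
shorter word has a singleton preimage with `m` or more elements. -/
theorem cerny_minimal_length_preimage (n m : ℕ) (hn : 2 ≤ n) (hm2 : 2 ≤ m) (hmn : m ≤ n) :
    (∃ w : List Letter, w.length = (m - 2) * n + 1 ∧
      ∃ q : ZMod n, m ≤ {p : ZMod n | run n w p = q}.ncard) ∧
    (∀ w : List Letter, w.length < (m - 2) * n + 1 →
      ∀ q : ZMod n, {p : ZMod n | run n w p = q}.ncard < m) := by
  have : NeZero n := ⟨by omega⟩
  obtain ⟨k, rfl⟩ := Nat.exists_eq_add_of_le' hm2
  rw [Nat.add_sub_cancel]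
  refine ⟨⟨cernyWord n k, length_cernyWord k, 0, ?_⟩, fun w hw q => ?_⟩
  · calc k + 2 = (arc (-1 : ZMod n) (k + 2)).ncard := (ncard_arc _ hmn).symm
      _ ≤ (run n (cernyWord n k) ⁻¹' {0}).ncard := by rw [preimage_run_cernyWord_zero]
  · refine Nat.lt_of_mul_lt_mul_right (a := n) ?_
    calc (run n w ⁻¹' {q}).ncard * n < w.length + 2 * n := ncard_preimage_run_mul_lt w q
      _ ≤ (k + 2) * n := by rw [Nat.add_mul]; omega
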